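/- (Leakage under reduction.) Let P' be a primitive on (𝒳₀×𝒳₁)×(𝒴₀×𝒴₁), let P be a primitive on 𝒳×𝒴, and let δ ∈ [0,1]. Let G be the set of pairs (x₁,y₁) with P'_{X₁Y₁}(x₁,y₁) > 0 for which there exist bijections f : 𝒳 → 𝒳₀ and g : 𝒴 → 𝒴₀ such that for all (u,v), P'(X₀=f(u), Y₀=g(v) | X₁=x₁, Y₁=y₁) = P(u,v). If Σ_{(x₁,y₁)∈G} P'_{X₁Y₁}(x₁,y₁) ≥ 1 − δ, then Δ_{P'} ≥ (1−δ)·Δ_P. -/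

import Mathlib

open scoped BigOperators
open Matrix

noncomputable section

open scoped Classical in
/-- Base-2 von Neumann entropy of a matrix: minus the sum of `λ·log₂ λ` over the real
eigenvalues (with multiplicity) if the matrix is Hermitian, and `0` otherwise. -/
def vNE {n : Type*} [Fintype n] (ρ : Matrix n n ℂ) : ℝ :=
  if h : ρ.IsHermitian then -∑ i, h.eigenvalues i * Real.logb 2 (h.eigenvalues i) else 0

/-- Shannon entropy (base 2), with the convention `0·log₂ 0 = 0`. -/
def shannon {α : Type*} [Fintype α] (p : α → ℝ) : ℝ :=
  -∑ a, p a * Real.logb 2 (p a)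

/-- Marginal on the first component: `P_X`. -/
def margX {X Y : Type*} [Fintype Y] (P : X × Y → ℝ) (x : X) : ℝ := ∑ y, P (x, y)

/-- Marginal on the second component: `P_Y`. -/
def margY {X Y : Type*} [Fintype X] (P : X × Y → ℝ) (y : Y) : ℝ := ∑ x, P (x, y)

/-- Mutual information `I(X;Y)` of a joint distribution `P` (base 2). -/
def mutualInfo {X Y : Type*} [Fintype X] [Fintype Y] (P : X × Y → ℝ) : ℝ :=
  ∑ x, ∑ y, P (x, y) * Real.logb 2 (P (x, y) / (margX P x * margY P y))

/-- The regular embedding `ψ_θ(x,y) = e^{iθ(x,y)}·√(P(x,y))`. -/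
def regEmb {X Y : Type*} (P θ : X × Y → ℝ) (xy : X × Y) : ℂ :=
  Complex.exp (Complex.I * θ xy) * (Real.sqrt (P xy) : ℂ)

/-- Reduced density matrix `ρ_A(θ)` of the regular embedding `ψ_θ`. -/
def rhoA {X Y : Type*} [Fintype Y] (P θ : X × Y → ℝ) : Matrix X X ℂ :=
  Matrix.of fun x x' => ∑ y, regEmb P θ (x, y) * star (regEmb P θ (x', y))

/-- Reduced density matrix `ρ_B(θ)` of the regular embedding `ψ_θ`. -/
def rhoB {X Y : Type*} [Fintype X] (P θ : X × Y → ℝ) : Matrix Y Y ℂ :=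
  Matrix.of fun y y' => ∑ x, regEmb P θ (x, y) * star (regEmb P θ (x, y'))

/-- Leakage `Δ(ψ_θ) = S(ρ_B(θ)) − I(X;Y)` of a regular embedding. -/
def leakReg {X Y : Type*} [Fintype X] [Fintype Y] (P θ : X × Y → ℝ) : ℝ :=
  vNE (rhoB P θ) - mutualInfo P

/-- Leakage `Δ_P` of a primitive: the infimum of the leakage over all phase functions. -/
def leakPrim {X Y : Type*} [Fintype X] [Fintype Y] (P : X × Y → ℝ) : ℝ :=
  ⨅ θ : X × Y → ℝ, leakReg P θ

/-- The marginal `P'_{X₁Y₁}` of the second coordinates of a primitive on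
`(𝒳₀×𝒳₁)×(𝒴₀×𝒴₁)`. -/
def margX1Y1 {𝒳₀ 𝒳₁ 𝒴₀ 𝒴₁ : Type*} [Fintype 𝒳₀] [Fintype 𝒴₀]
    (P' : (𝒳₀ × 𝒳₁) × (𝒴₀ × 𝒴₁) → ℝ) (q : 𝒳₁ × 𝒴₁) : ℝ :=
  ∑ x₀, ∑ y₀, P' ((x₀, q.1), (y₀, q.2))

/-- Comparison of two classical relative-entropy expressions through the resolvent-type sums
`∑ c s² / ((1 - t) r + t s)`: a pointwise inequality in `t` integrates to one of entropies. -/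
theorem sum_mul_log_sub_log_le {ι κ : Type*} [Fintype ι] [Fintype κ]
    (c s r : ι → ℝ) (q p : κ → ℝ)
    (hs : ∀ a, 0 ≤ s a) (hcr : ∀ a, c a ≠ 0 → s a ≠ 0 → 0 < r a)
    (hq : ∀ i, 0 ≤ q i) (hqp : ∀ i, q i ≠ 0 → 0 < p i)
    (hsum : ∑ a, c a * s a = ∑ i, q i)
    (hres : ∀ t : ℝ, 0 < t → t < 1 →
      ∑ i, q i ^ 2 / ((1 - t) * p i + t * q i) ≤
        ∑ a, c a * (s a ^ 2 / ((1 - t) * r a + t * s a))) :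
    ∑ i, q i * (Real.log (q i) - Real.log (p i)) ≤
      ∑ a, c a * s a * (Real.log (s a) - Real.log (r a)) := by
  have hpos : ∀ {x y t : ℝ}, 0 < x → 0 < y → 0 ≤ t → t ≤ 1 → 0 < (1 - t) * x + t * y := by
    intro x y t hx hy h0 h1
    rcases h0.eq_or_lt with rfl | h0
    · simpa using hx
    · have := mul_pos h0 hy
      have := mul_nonneg (sub_nonneg.2 h1) hx.le
      linarith
  have hderiv : ∀ {w x y t : ℝ}, 0 ≤ y → (w ≠ 0 → y ≠ 0 → 0 < x) → 0 ≤ t → t ≤ 1 →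
      HasDerivAt (fun t : ℝ => w * y * Real.log ((1 - t) * x + t * y))
        (w * y * ((y - x) / ((1 - t) * x + t * y))) t := by
    intro w x y t hy hx h0 h1
    by_cases hw : w = 0
    · simpa [hw] using hasDerivAt_const t (0 : ℝ)
    by_cases hy0 : y = 0
    · simpa [hy0] using hasDerivAt_const t (0 : ℝ)
    have hm := hpos (hx hw hy0) (lt_of_le_of_ne hy (Ne.symm hy0)) h0 h1
    have hlin : HasDerivAt (fun t : ℝ => (1 - t) * x + t * y) (y - x) t := by
      have h := (((hasDerivAt_id t).const_sub 1).mul_const x).add ((hasDerivAt_id t).mul_const y)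
      exact h.congr_deriv (by ring)
    exact (hlin.log hm.ne').const_mul _
  have hslope : ∀ {w x y t : ℝ}, 0 ≤ y → (w ≠ 0 → y ≠ 0 → 0 < x) → 0 ≤ t → t ≤ 1 →
      (1 - t) * (w * y * ((y - x) / ((1 - t) * x + t * y))) =
        w * (y ^ 2 / ((1 - t) * x + t * y)) - w * y := by
    intro w x y t hy hx h0 h1
    by_cases hw : w = 0
    · simp [hw]
    by_cases hy0 : y = 0
    · simp [hy0]
    have hm := (hpos (hx hw hy0) (lt_of_le_of_ne hy (Ne.symm hy0)) h0 h1).ne'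
    field_simp
    ring
  let F : ℝ → ℝ := fun t => ∑ a, c a * s a * Real.log ((1 - t) * r a + t * s a) -
    ∑ i, 1 * q i * Real.log ((1 - t) * p i + t * q i)
  have hF : ∀ t, 0 ≤ t → t ≤ 1 → HasDerivAt F
      (∑ a, c a * s a * ((s a - r a) / ((1 - t) * r a + t * s a)) -
        ∑ i, 1 * q i * ((q i - p i) / ((1 - t) * p i + t * q i))) t := by
    intro t h0 h1
    exact (HasDerivAt.fun_sum fun a _ => hderiv (hs a) (hcr a) h0 h1).sub
      (HasDerivAt.fun_sum fun i _ => hderiv (hq i) (fun _ => hqp i) h0 h1)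
  have hmono : MonotoneOn F (Set.Icc 0 1) := by
    refine monotoneOn_of_deriv_nonneg (convex_Icc 0 1)
      (fun t ht => (hF t ht.1 ht.2).continuousAt.continuousWithinAt) ?_ ?_
    · intro t ht
      rw [interior_Icc] at ht
      exact (hF t ht.1.le ht.2.le).differentiableAt.differentiableWithinAt
    · intro t ht
      rw [interior_Icc] at ht
      rw [(hF t ht.1.le ht.2.le).deriv]
      refine nonneg_of_mul_nonneg_right ?_ (sub_pos.2 ht.2)
      rw [mul_sub, Finset.mul_sum, Finset.mul_sum,
        Finset.sum_congr rfl fun a _ => hslope (hs a) (hcr a) ht.1.le ht.2.le,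
        Finset.sum_congr rfl fun i _ => hslope (hq i) (fun _ => hqp i) ht.1.le ht.2.le,
        Finset.sum_sub_distrib, Finset.sum_sub_distrib]
      simp only [one_mul]
      linarith [hres t ht.1 ht.2]
  have h01 : F 0 ≤ F 1 := hmono (by simp) (by simp) zero_le_one
  simp only [F, sub_zero, sub_self, zero_mul, one_mul, add_zero, zero_add] at h01
  simp only [mul_sub, Finset.sum_sub_distrib]
  linarith

/-- Completing the square for a complex number. -/
theorem two_mul_re_conj_mul_sub_le (a w : ℂ) {m s : ℝ} (hm : 0 ≤ m) (hs : m = 0 → s = 0) :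
    2 * (star a * (s * w)).re - m * ‖a‖ ^ 2 ≤ ‖w‖ ^ 2 * (s ^ 2 / m) := by
  rcases hm.eq_or_lt with rfl | hm
  · simp [hs rfl]
  have h1 : (star a * (s * w)).re ≤ ‖a‖ * (|s| * ‖w‖) := by
    refine (Complex.re_le_norm _).trans (le_of_eq ?_)
    simp
  have h2 : ‖w‖ ^ 2 * (s ^ 2 / m) = (|s| * ‖w‖) ^ 2 / m := by
    rw [mul_pow, sq_abs]; ring
  rw [h2, le_div_iff₀ hm]
  nlinarith [sq_nonneg (|s| * ‖w‖ - m * ‖a‖)]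

open scoped Classical in
/-- The quadratic variational bound underlying monotonicity of relative entropy under a
projective measurement in the computational basis. -/
theorem sum_sq_div_le_of_diagonalization {n : Type*} [Fintype n] {U V σ ρ : Matrix n n ℂ}
    {s r : n → ℝ} (hU : U * Uᴴ = 1) (hV : V * Vᴴ = 1)
    (hσ : σ = U * diagonal (fun i => (s i : ℂ)) * Uᴴ)
    (hρ : ρ = V * diagonal (fun i => (r i : ℂ)) * Vᴴ)
    (hs : ∀ i, 0 ≤ s i) (hr : ∀ i, 0 ≤ r i) {t : ℝ} (h0 : 0 < t) (h1 : t < 1) :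
    ∑ i, (σ i i).re ^ 2 / ((1 - t) * (ρ i i).re + t * (σ i i).re) ≤
      ∑ a : n × n, ‖(Uᴴ * V) a.1 a.2‖ ^ 2 * (s a.1 ^ 2 / ((1 - t) * r a.2 + t * s a.1)) := by
  set x : n → ℝ := fun i => (σ i i).re / ((1 - t) * (ρ i i).re + t * (σ i i).re) with hx
  set D : Matrix n n ℂ := diagonal fun i => (x i : ℂ) with hD
  have hDH : Dᴴ = D := by
    rw [hD, diagonal_conjTranspose]; congr 1; ext i; simp
  set A := Uᴴ * D * V with hA
  have hAH : Aᴴ = Vᴴ * D * U := by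
    simp [hA, conjTranspose_mul, hDH, Matrix.mul_assoc]
  have e1 : ∑ a : n × n, (star (A a.1 a.2) * (s a.1 * (Uᴴ * V) a.1 a.2)).re =
      ∑ i, x i * (σ i i).re := by
    have : trace (Aᴴ * (diagonal (fun i => (s i : ℂ)) * (Uᴴ * V))) = trace (D * σ) := by
      rw [hAH, hσ]
      calc _ = trace (Vᴴ * (D * (U * diagonal (fun i => (s i : ℂ)) * Uᴴ) * V)) := by
            simp only [Matrix.mul_assoc]
        _ = trace (D * (U * diagonal (fun i => (s i : ℂ)) * Uᴴ) * V * Vᴴ) := trace_mul_comm _ _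
        _ = _ := by rw [Matrix.mul_assoc _ V, hV, Matrix.mul_one]
    have h := congrArg Complex.re this
    rw [trace, trace] at h
    simp only [diag_apply, hD, diagonal_mul, Complex.re_sum, Complex.re_ofReal_mul] at h
    rw [← h, Fintype.sum_prod_type_right]
    simp [Matrix.mul_apply (M := Aᴴ), diagonal_mul]
  have e2 : ∑ a : n × n, s a.1 * ‖A a.1 a.2‖ ^ 2 = ∑ i, x i ^ 2 * (σ i i).re := by
    have : trace (Aᴴ * (diagonal (fun i => (s i : ℂ)) * A)) = trace (D * σ * D) := by
      rw [hAH, hσ, hA]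
      calc _ = trace (Vᴴ * (D * (U * diagonal (fun i => (s i : ℂ)) * Uᴴ) * D * V)) := by
            simp only [Matrix.mul_assoc]
        _ = trace (D * (U * diagonal (fun i => (s i : ℂ)) * Uᴴ) * D * V * Vᴴ) :=
            trace_mul_comm _ _
        _ = _ := by rw [Matrix.mul_assoc _ V, hV, Matrix.mul_one]
    have h := congrArg Complex.re this
    rw [trace, trace] at h
    simp only [diag_apply, hD, diagonal_mul, mul_diagonal, Complex.re_sum,
      Complex.re_ofReal_mul, Complex.re_mul_ofReal] at h
    rw [Finset.sum_congr rfl fun i _ => show x i ^ 2 * (σ i i).re = x i * (σ i i).re * x i by ring,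
      ← h, Fintype.sum_prod_type_right]
    refine Finset.sum_congr rfl fun k _ => ?_
    rw [Matrix.mul_apply, Complex.re_sum]
    refine Finset.sum_congr rfl fun j _ => ?_
    rw [diagonal_mul, conjTranspose_apply, mul_left_comm, Complex.star_def, Complex.conj_mul',
      Complex.re_ofReal_mul]
    norm_cast
  have e3 : ∑ a : n × n, r a.2 * ‖A a.1 a.2‖ ^ 2 = ∑ i, x i ^ 2 * (ρ i i).re := by
    have : trace (A * (diagonal (fun i => (r i : ℂ)) * Aᴴ)) = trace (D * ρ * D) := by
      rw [hAH, hρ, hA]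
      calc _ = trace (Uᴴ * (D * (V * diagonal (fun i => (r i : ℂ)) * Vᴴ) * D * U)) := by
            simp only [Matrix.mul_assoc]
        _ = trace (D * (V * diagonal (fun i => (r i : ℂ)) * Vᴴ) * D * U * Uᴴ) :=
            trace_mul_comm _ _
        _ = _ := by rw [Matrix.mul_assoc _ U, hU, Matrix.mul_one]
    have h := congrArg Complex.re this
    rw [trace, trace] at h
    simp only [diag_apply, hD, diagonal_mul, mul_diagonal, Complex.re_sum,
      Complex.re_ofReal_mul, Complex.re_mul_ofReal] at h
    rw [Finset.sum_congr rfl fun i _ => show x i ^ 2 * (ρ i i).re = x i * (ρ i i).re * x i by ring,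
      ← h, Fintype.sum_prod_type]
    refine Finset.sum_congr rfl fun j _ => ?_
    rw [Matrix.mul_apply, Complex.re_sum]
    refine Finset.sum_congr rfl fun k _ => ?_
    rw [diagonal_mul, conjTranspose_apply, mul_left_comm, Complex.star_def, Complex.mul_conj',
      Complex.re_ofReal_mul]
    norm_cast
  have hterm : ∀ i, (σ i i).re ^ 2 / ((1 - t) * (ρ i i).re + t * (σ i i).re) =
      2 * (x i * (σ i i).re) -
        ((1 - t) * (x i ^ 2 * (ρ i i).re) + t * (x i ^ 2 * (σ i i).re)) := by
    intro i
    by_cases hm : (1 - t) * (ρ i i).re + t * (σ i i).re = 0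
    · simp [hx, hm]
    · have : x i * ((1 - t) * (ρ i i).re + t * (σ i i).re) = (σ i i).re := div_mul_cancel₀ _ hm
      rw [pow_two, mul_div_assoc]
      change _ * x i = _
      linear_combination x i * this
  rw [Finset.sum_congr rfl fun i _ => hterm i, Finset.sum_sub_distrib, Finset.sum_add_distrib,
    ← Finset.mul_sum, ← Finset.mul_sum, ← Finset.mul_sum, ← e1, ← e2, ← e3, Finset.mul_sum,
    Finset.mul_sum, Finset.mul_sum, ← Finset.sum_add_distrib, ← Finset.sum_sub_distrib]
  refine Finset.sum_le_sum fun a _ => ?_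
  have hr' := mul_nonneg (sub_pos.2 h1).le (hr a.2)
  have hs' := mul_nonneg h0.le (hs a.1)
  refine le_trans (le_of_eq ?_) (two_mul_re_conj_mul_sub_le (A a.1 a.2) ((Uᴴ * V) a.1 a.2)
    (add_nonneg hr' hs') fun h => ?_)
  · ring
  · have : t * s a.1 = 0 := by linarith
    exact (mul_eq_zero.1 this).resolve_left h0.ne'

open scoped ComplexOrder

theorem Matrix.PosSemidef.re_conj_diag_nonneg {n : Type*} [Fintype n] {σ : Matrix n n ℂ}
    (hσ : σ.PosSemidef) (V : Matrix n n ℂ) (k : n) : 0 ≤ ((Vᴴ * σ * V) k k).re :=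
  (Complex.le_def.1 (hσ.conjTranspose_mul_mul_same V).diag_nonneg).1

open scoped Classical in
/-- Monotonicity of relative entropy under a projective measurement in the computational basis,
for positive semidefinite matrices `σ ≤ ρ` given by their diagonalizations. -/
theorem measured_relEntropy_le {n : Type*} [Fintype n] {U V σ ρ : Matrix n n ℂ}
    {s r : n → ℝ} (hU' : Uᴴ * U = 1) (hU : U * Uᴴ = 1) (hV' : Vᴴ * V = 1) (hV : V * Vᴴ = 1)
    (hσ : σ = U * diagonal (fun i => (s i : ℂ)) * Uᴴ)
    (hρ : ρ = V * diagonal (fun i => (r i : ℂ)) * Vᴴ)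
    (hs : ∀ i, 0 ≤ s i) (hr : ∀ i, 0 ≤ r i)
    (hσ0 : σ.PosSemidef) (hle : (ρ - σ).PosSemidef) :
    ∑ i, (σ i i).re * (Real.log (σ i i).re - Real.log (ρ i i).re) ≤
      ∑ j, s j * Real.log (s j) - ∑ k, ((Vᴴ * σ * V) k k).re * Real.log (r k) := by
  set W := Uᴴ * V with hW
  have hWW : W * Wᴴ = 1 := by
    rw [hW, conjTranspose_mul, conjTranspose_conjTranspose, Matrix.mul_assoc,
      ← Matrix.mul_assoc V, hV, Matrix.one_mul, hU']
  have hrow : ∀ j, ∑ k, ‖W j k‖ ^ 2 = 1 := by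
    intro j
    have h := congrArg Complex.re (congrFun (congrFun hWW j) j)
    rw [Matrix.mul_apply, one_apply_eq, Complex.re_sum] at h
    rw [← Complex.one_re, ← h]
    refine Finset.sum_congr rfl fun k _ => ?_
    rw [conjTranspose_apply, Complex.star_def, Complex.mul_conj']
    norm_cast
  have hcol : ∀ k, ((Vᴴ * σ * V) k k).re = ∑ j, ‖W j k‖ ^ 2 * s j := by
    intro k
    have h : Vᴴ * σ * V = Wᴴ * (diagonal (fun i => (s i : ℂ)) * W) := by
      rw [hσ, hW, conjTranspose_mul, conjTranspose_conjTranspose]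
      simp only [Matrix.mul_assoc]
    rw [h, Matrix.mul_apply, Complex.re_sum]
    refine Finset.sum_congr rfl fun j _ => ?_
    rw [diagonal_mul, conjTranspose_apply, mul_left_comm, Complex.star_def, Complex.conj_mul',
      Complex.re_ofReal_mul, mul_comm]
    norm_cast
  have hVρ : Vᴴ * ρ * V = diagonal (fun i => (r i : ℂ)) := by
    rw [hρ]
    calc _ = (Vᴴ * V) * diagonal (fun i => (r i : ℂ)) * (Vᴴ * V) := by
          simp only [Matrix.mul_assoc]
      _ = _ := by rw [hV', Matrix.one_mul, Matrix.mul_one]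
  have hcolle : ∀ k, ∑ j, ‖W j k‖ ^ 2 * s j ≤ r k := by
    intro k
    have h := hle.re_conj_diag_nonneg V k
    rw [Matrix.mul_sub, Matrix.sub_mul, hVρ, Matrix.sub_apply, diagonal_apply_eq, Complex.sub_re,
      hcol k, Complex.ofReal_re] at h
    linarith
  have hdiag : ∀ i, 0 ≤ (σ i i).re := fun i => (Complex.le_def.1 hσ0.diag_nonneg).1
  have hdiagle : ∀ i, (σ i i).re ≤ (ρ i i).re := by
    intro i
    have h : 0 ≤ ((ρ - σ) i i).re := (Complex.le_def.1 hle.diag_nonneg).1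
    rw [Matrix.sub_apply, Complex.sub_re] at h
    linarith
  have hsum : ∑ a : n × n, ‖W a.1 a.2‖ ^ 2 * s a.1 = ∑ i, (σ i i).re := by
    rw [Fintype.sum_prod_type]
    simp only [← Finset.sum_mul, hrow, one_mul]
    have h : trace σ = ∑ i, (s i : ℂ) := by
      rw [hσ, trace_mul_comm, ← Matrix.mul_assoc, hU', Matrix.one_mul, trace_diagonal]
    have h' := congrArg Complex.re h
    rw [trace, Complex.re_sum, Complex.re_sum] at h'
    simpa using h'.symm
  refine (sum_mul_log_sub_log_le (fun a : n × n => ‖W a.1 a.2‖ ^ 2) (fun a => s a.1)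
    (fun a => r a.2) (fun i => (σ i i).re) (fun i => (ρ i i).re) (fun a => hs a.1) ?_ hdiag ?_
    hsum fun t h0 h1 => sum_sq_div_le_of_diagonalization hU hV hσ hρ hs hr h0 h1).trans
    (le_of_eq ?_)
  · intro a hc hsa
    have h1 : 0 < ‖W a.1 a.2‖ ^ 2 * s a.1 :=
      mul_pos (lt_of_le_of_ne (sq_nonneg _) (Ne.symm hc)) (lt_of_le_of_ne (hs _) (Ne.symm hsa))
    have h2 := Finset.single_le_sum (f := fun j => ‖W j a.2‖ ^ 2 * s j)
      (fun j _ => mul_nonneg (sq_nonneg _) (hs j)) (Finset.mem_univ a.1)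
    exact h1.trans_le (h2.trans (hcolle a.2))
  · intro i hi
    exact (lt_of_le_of_ne (hdiag i) (Ne.symm hi)).trans_le (hdiagle i)
  · simp only [mul_sub, Finset.sum_sub_distrib]
    congr 1
    · rw [Fintype.sum_prod_type]
      refine Finset.sum_congr rfl fun j _ => ?_
      simp only [← Finset.sum_mul, hrow, one_mul]
    · rw [Fintype.sum_prod_type_right]
      refine Finset.sum_congr rfl fun k _ => ?_
      rw [hcol k, Finset.sum_mul]

open scoped Classical in
theorem Matrix.PosSemidef.exists_diagonalization {n : Type*} [Fintype n] {A : Matrix n n ℂ}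
    (hA : A.PosSemidef) : ∃ (U : Matrix n n ℂ) (d : n → ℝ), Uᴴ * U = 1 ∧ U * Uᴴ = 1 ∧
      A = U * diagonal (fun i => (d i : ℂ)) * Uᴴ ∧ (∀ i, 0 ≤ d i) ∧
      vNE A = -∑ i, d i * Real.logb 2 (d i) := by
  refine ⟨hA.1.eigenvectorUnitary, hA.1.eigenvalues,
    Unitary.coe_star_mul_self hA.1.eigenvectorUnitary,
    Unitary.coe_mul_star_self hA.1.eigenvectorUnitary, ?_, hA.eigenvalues_nonneg, ?_⟩
  · exact hA.1.spectral_theorem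
  · rw [vNE, dif_pos hA.1]

/-- The Holevo bound for the computational-basis measurement, for a decomposition of a matrix
into positive semidefinite summands. -/
theorem sum_measured_le_vNE_sub {n ι : Type*} [Fintype n] [Fintype ι]
    (σ : ι → Matrix n n ℂ) (hσ : ∀ z, (σ z).PosSemidef) :
    ∑ z, ∑ i, (σ z i i).re * (Real.logb 2 (σ z i i).re - Real.logb 2 ((∑ z, σ z) i i).re) ≤
      vNE (∑ z, σ z) - ∑ z, vNE (σ z) := by
  classical
  have hρ : (∑ z, σ z).PosSemidef := posSemidef_sum _ fun z _ => hσ z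
  obtain ⟨V, r, hV', hV, hρd, hr, hent⟩ := PosSemidef.exists_diagonalization hρ
  have hVρ : Vᴴ * (∑ z, σ z) * V = diagonal (fun i => (r i : ℂ)) := by
    rw [hρd]
    calc _ = (Vᴴ * V) * diagonal (fun i => (r i : ℂ)) * (Vᴴ * V) := by
          simp only [Matrix.mul_assoc]
      _ = _ := by rw [hV', Matrix.one_mul, Matrix.mul_one]
  have hpart : ∀ k, ∑ z, ((Vᴴ * σ z * V) k k).re = r k := by
    intro k
    have h := congrArg Complex.re (congrFun (congrFun hVρ k) k)
    rw [Matrix.mul_sum, Matrix.sum_mul, Matrix.sum_apply, Complex.re_sum, diagonal_apply_eq,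
      Complex.ofReal_re] at h
    exact h
  have hlog : 0 < Real.log 2 := Real.log_pos one_lt_two
  have hstep : ∀ z, ∑ i, (σ z i i).re *
      (Real.logb 2 (σ z i i).re - Real.logb 2 ((∑ z, σ z) i i).re) ≤
      -vNE (σ z) - ∑ k, ((Vᴴ * σ z * V) k k).re * Real.logb 2 (r k) := by
    intro z
    obtain ⟨U, s, hU', hU, hσd, hs, hent'⟩ := PosSemidef.exists_diagonalization (hσ z)
    have hle : (∑ z, σ z - σ z).PosSemidef := by
      rw [← Finset.sum_erase_eq_sub (Finset.mem_univ z)]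
      exact posSemidef_sum _ fun z _ => hσ z
    have h := measured_relEntropy_le hU' hU hV' hV hσd hρd hs hr (hσ z) hle
    rw [hent', neg_neg]
    simp only [Real.logb, ← sub_div, ← mul_div_assoc, ← Finset.sum_div]
    exact div_le_div_of_nonneg_right h hlog.le
  refine (Finset.sum_le_sum fun z _ => hstep z).trans (le_of_eq ?_)
  rw [Finset.sum_sub_distrib, Finset.sum_comm, Finset.sum_neg_distrib, hent]
  simp only [← Finset.sum_mul, hpart]
  ring

open scoped Classical in
theorem vNE_eq_sum_roots {n : Type*} [Fintype n] {A : Matrix n n ℂ} (hA : A.IsHermitian) :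
    vNE A = -(A.charpoly.roots.map fun z => z.re * Real.logb 2 z.re).sum := by
  rw [vNE, dif_pos hA, hA.roots_charpoly_eq_eigenvalues, Multiset.map_map]
  simp [Function.comp_def]

open scoped Classical in
theorem vNE_of_diagonalization {n : Type*} [Fintype n] {A U : Matrix n n ℂ} {d : n → ℝ}
    (hA : A.IsHermitian) (hU : Uᴴ * U = 1) (h : A = U * diagonal (fun i => (d i : ℂ)) * Uᴴ) :
    vNE A = -∑ i, d i * Real.logb 2 (d i) := by
  have hc : A.charpoly = (diagonal fun i => (d i : ℂ)).charpoly := by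
    rw [h, charpoly_mul_comm, ← Matrix.mul_assoc, hU, Matrix.one_mul]
  rw [vNE_eq_sum_roots hA, hc, charpoly_diagonal, Polynomial.roots_prod _ _
    (Finset.prod_ne_zero_iff.2 fun i _ => Polynomial.X_sub_C_ne_zero _)]
  simp

theorem vNE_smul {n : Type*} [Fintype n] {A : Matrix n n ℂ} (hA : A.PosSemidef) {c : ℝ}
    (hc : 0 < c) :
    vNE ((c : ℂ) • A) = c * vNE A - c * Real.logb 2 c * A.trace.re := by
  classical
  obtain ⟨U, d, hU', hU, hd, hd0, hent⟩ := hA.exists_diagonalization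
  have hcA : ((c : ℂ) • A).PosSemidef := hA.smul (by exact_mod_cast hc.le)
  have hdiag : (c : ℂ) • A = U * diagonal (fun i => ((c * d i : ℝ) : ℂ)) * Uᴴ := by
    have : (diagonal fun i => ((c * d i : ℝ) : ℂ)) =
        (c : ℂ) • diagonal (fun i => (d i : ℂ)) := by
      rw [← diagonal_smul]; congr 1; ext i; simp
    rw [this, Matrix.mul_smul, Matrix.smul_mul, ← hd]
  have htr : A.trace.re = ∑ i, d i := by
    conv_lhs => rw [hd]
    rw [trace_mul_comm, ← Matrix.mul_assoc, hU', Matrix.one_mul, trace_diagonal, Complex.re_sum]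
    simp
  rw [vNE_of_diagonalization hcA.1 hU' hdiag, hent, htr, mul_neg, Finset.mul_sum,
    Finset.mul_sum, ← neg_add', ← Finset.sum_add_distrib]
  congr 1
  refine Finset.sum_congr rfl fun i _ => ?_
  by_cases h0 : d i = 0
  · simp [h0]
  · rw [Real.logb_mul hc.ne' h0]
    ring

theorem vNE_submatrix_equiv {m n : Type*} [Fintype m] [Fintype n] {A : Matrix n n ℂ}
    (hA : A.IsHermitian) (e : m ≃ n) : vNE (A.submatrix e e) = vNE A := by
  classical
  rw [vNE_eq_sum_roots (hA.submatrix e), vNE_eq_sum_roots hA]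
  have h := charpoly_reindex e.symm A
  rw [reindex_apply, Equiv.symm_symm] at h
  congr! 4

theorem vNE_transpose {n : Type*} [Fintype n] {A : Matrix n n ℂ} (hA : A.IsHermitian) :
    vNE Aᵀ = vNE A := by
  classical
  rw [vNE_eq_sum_roots hA.transpose, vNE_eq_sum_roots hA, charpoly_transpose]

theorem vNE_mul_conjTranspose_comm {m n : Type*} [Fintype m] [Fintype n] (M : Matrix m n ℂ) :
    vNE (M * Mᴴ) = vNE (Mᴴ * M) := by
  classical
  rw [vNE_eq_sum_roots (isHermitian_mul_conjTranspose_self M),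
    vNE_eq_sum_roots (isHermitian_conjTranspose_mul_self M)]
  have h := congrArg (fun p : Polynomial ℂ =>
    (p.roots.map fun z => z.re * Real.logb 2 z.re).sum) (charpoly_mul_comm' M Mᴴ)
  have hX : ∀ k : ℕ, (Polynomial.X ^ k : Polynomial ℂ) ≠ 0 :=
    fun k => pow_ne_zero _ Polynomial.X_ne_zero
  simp only [Polynomial.roots_mul (mul_ne_zero (hX _) (charpoly_monic _).ne_zero),
    Polynomial.roots_pow, Polynomial.roots_X, Multiset.map_add, Multiset.map_nsmul,
    Multiset.sum_add, Multiset.sum_nsmul, Multiset.map_singleton, Multiset.sum_singleton,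
    Complex.zero_re, zero_mul, smul_zero, zero_add] at h
  rw [h]

theorem vNE_of_unique {n : Type*} [Fintype n] [Unique n] {A : Matrix n n ℂ}
    (hA : A.IsHermitian) :
    vNE A = -((A default default).re * Real.logb 2 (A default default).re) := by
  rw [vNE, dif_pos hA, Fintype.sum_unique]
  have h := congrArg Complex.re (hA.trace_eq_sum_eigenvalues)
  rw [trace, Fintype.sum_unique, Fintype.sum_unique, diag_apply] at h
  rw [h]
  rfl

section Embedding

variable {X Y : Type*} (P θ : X × Y → ℝ)

theorem regEmb_mul_star_self (hP : ∀ z, 0 ≤ P z) (z : X × Y) :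
    regEmb P θ z * star (regEmb P θ z) = (P z : ℂ) := by
  have hn : ‖regEmb P θ z‖ = Real.sqrt (P z) := by
    rw [regEmb, norm_mul, mul_comm Complex.I, Complex.norm_exp_ofReal_mul_I, one_mul,
      Complex.norm_real, Real.norm_of_nonneg (Real.sqrt_nonneg _)]
  rw [Complex.star_def, Complex.mul_conj', hn, ← Complex.ofReal_pow, Real.sq_sqrt (hP z)]

theorem rhoB_eq_mul_conjTranspose [Fintype X] :
    rhoB P θ = (of fun y x => regEmb P θ (x, y)) * (of fun y x => regEmb P θ (x, y))ᴴ := by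
  ext y y'
  simp [rhoB, Matrix.mul_apply]

theorem rhoB_posSemidef [Fintype X] [Fintype Y] : (rhoB P θ).PosSemidef := by
  rw [rhoB_eq_mul_conjTranspose]
  exact posSemidef_self_mul_conjTranspose _

theorem rhoB_apply_self_re [Fintype X] (hP : ∀ z, 0 ≤ P z) (y : Y) :
    (rhoB P θ y y).re = margY P y := by
  simp only [rhoB, of_apply, regEmb_mul_star_self P θ hP, margY, Complex.re_sum,
    Complex.ofReal_re]

theorem margX_pos [Fintype Y] (hP : ∀ z, 0 ≤ P z) {x : X} {y : Y} (h : P (x, y) ≠ 0) :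
    0 < margX P x :=
  (lt_of_le_of_ne (hP _) (Ne.symm h)).trans_le
    (Finset.single_le_sum (f := fun y => P (x, y)) (fun _ _ => hP _) (Finset.mem_univ y))

theorem margY_pos [Fintype X] (hP : ∀ z, 0 ≤ P z) {x : X} {y : Y} (h : P (x, y) ≠ 0) :
    0 < margY P y :=
  (lt_of_le_of_ne (hP _) (Ne.symm h)).trans_le
    (Finset.single_le_sum (f := fun x => P (x, y)) (fun _ _ => hP _) (Finset.mem_univ x))

variable [Fintype X] [Fintype Y]

theorem leakReg_swap : leakReg (P ∘ Prod.swap) (θ ∘ Prod.swap) = leakReg P θ := by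
  have hI : mutualInfo (P ∘ Prod.swap) = mutualInfo P := by
    rw [mutualInfo, mutualInfo, Finset.sum_comm]
    refine Finset.sum_congr rfl fun x _ => Finset.sum_congr rfl fun y _ => ?_
    simp only [Function.comp_apply, Prod.swap_prod_mk, margX, margY]
    rw [mul_comm (∑ z, P (z, y))]
  have hS : vNE (rhoB (P ∘ Prod.swap) (θ ∘ Prod.swap)) = vNE (rhoB P θ) := by
    have h : rhoB (P ∘ Prod.swap) (θ ∘ Prod.swap) =
        ((of fun y x => regEmb P θ (x, y))ᴴ * (of fun y x => regEmb P θ (x, y)))ᵀ := by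
      ext x x'
      simp only [rhoB, regEmb, of_apply, Function.comp_apply, Prod.swap_prod_mk,
        transpose_apply, Matrix.mul_apply, conjTranspose_apply]
      exact Finset.sum_congr rfl fun y _ => mul_comm _ _
    rw [h, vNE_transpose (isHermitian_conjTranspose_mul_self _), ← vNE_mul_conjTranspose_comm,
      rhoB_eq_mul_conjTranspose]
  rw [leakReg, leakReg, hI, hS]

theorem leakReg_reindex {X' Y' : Type*} [Fintype X'] [Fintype Y'] (f : X' ≃ X) (g : Y' ≃ Y) :
    leakReg (fun z : X' × Y' => P (f z.1, g z.2)) (fun z => θ (f z.1, g z.2)) = leakReg P θ := by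
  have hI : mutualInfo (fun z : X' × Y' => P (f z.1, g z.2)) = mutualInfo P := by
    simp only [mutualInfo, margX, margY]
    rw [← f.sum_comp]
    refine Finset.sum_congr rfl fun x _ => ?_
    rw [← g.sum_comp]
    refine Finset.sum_congr rfl fun y _ => ?_
    rw [f.sum_comp fun x => P (x, g y), g.sum_comp fun y => P (f x, y)]
  have hS : rhoB (fun z : X' × Y' => P (f z.1, g z.2)) (fun z => θ (f z.1, g z.2)) =
      (rhoB P θ).submatrix g g := by
    ext y y'
    simp only [rhoB, of_apply, submatrix_apply]
    rw [← f.sum_comp]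
    rfl
  rw [leakReg, leakReg, hI, hS, vNE_submatrix_equiv (rhoB_posSemidef P θ).1]

theorem leakReg_const_mul (hP : ∀ z, 0 ≤ P z) {c : ℝ} (hc : 0 < c) :
    leakReg (fun z => c * P z) θ = c * leakReg P θ := by
  have htr : (rhoB P θ).trace.re = ∑ x, ∑ y, P (x, y) := by
    rw [trace, Complex.re_sum, Finset.sum_comm]
    exact Finset.sum_congr rfl fun y _ => rhoB_apply_self_re P θ hP y
  have hI : mutualInfo (fun z => c * P z) =
      c * mutualInfo P - c * Real.logb 2 c * ∑ x, ∑ y, P (x, y) := by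
    simp only [mutualInfo, Finset.mul_sum, ← Finset.sum_sub_distrib]
    refine Finset.sum_congr rfl fun x _ => Finset.sum_congr rfl fun y _ => ?_
    by_cases h : P (x, y) = 0
    · simp [h]
    have hx := (margX_pos P hP h).ne'
    have hy := (margY_pos P hP h).ne'
    have e : c * P (x, y) / (margX (fun z => c * P z) x * margY (fun z => c * P z) y) =
        P (x, y) / (margX P x * margY P y) / c := by
      have h1 : margX (fun z => c * P z) x = c * margX P x := by simp [margX, Finset.mul_sum]
      have h2 : margY (fun z => c * P z) y = c * margY P y := by simp [margY, Finset.mul_sum]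
      rw [h1, h2]
      field_simp
    rw [e, Real.logb_div (div_ne_zero h (mul_ne_zero hx hy)) hc.ne']
    ring
  have hS : rhoB (fun z => c * P z) θ = (c : ℂ) • rhoB P θ := by
    ext y y'
    simp only [rhoB, regEmb, of_apply, Matrix.smul_apply, smul_eq_mul, Finset.mul_sum]
    refine Finset.sum_congr rfl fun x _ => ?_
    have hsq : (Real.sqrt c : ℂ) * Real.sqrt c = c := by
      rw [← Complex.ofReal_mul, Real.mul_self_sqrt hc.le]
    rw [Real.sqrt_mul hc.le, Real.sqrt_mul hc.le, ← hsq]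
    simp only [star_mul', Complex.ofReal_mul, Complex.star_def, Complex.conj_ofReal]
    ring
  rw [leakReg, leakReg, hI, hS, vNE_smul (rhoB_posSemidef P θ) hc, htr]
  ring

end Embedding

/-- Leakage does not increase when the second part of the first party's output is conditioned
upon; the conditional distributions are left unnormalized. -/
theorem sum_leakReg_slice_fst_le {X₀ X₁ Y : Type*} [Fintype X₀] [Fintype X₁] [Fintype Y]
    (P θ : (X₀ × X₁) × Y → ℝ) (hP : ∀ z, 0 ≤ P z) :
    ∑ x₁, leakReg (fun z : X₀ × Y => P ((z.1, x₁), z.2)) (fun z => θ ((z.1, x₁), z.2)) ≤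
      leakReg P θ := by
  have hrho : rhoB P θ = ∑ x₁, rhoB (fun z : X₀ × Y => P ((z.1, x₁), z.2))
      (fun z => θ ((z.1, x₁), z.2)) := by
    ext y y'
    rw [Matrix.sum_apply]
    simp only [rhoB, of_apply]
    rw [Fintype.sum_prod_type_right]
    rfl
  have hH := sum_measured_le_vNE_sub (fun x₁ => rhoB (fun z : X₀ × Y => P ((z.1, x₁), z.2))
      (fun z => θ ((z.1, x₁), z.2))) fun x₁ => rhoB_posSemidef _ _
  simp only [← hrho, rhoB_apply_self_re P θ hP,
    rhoB_apply_self_re (fun z : X₀ × Y => P ((z.1, _), z.2)) _ fun z => hP _] at hH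
  have hI : mutualInfo P = ∑ x₁, mutualInfo (fun z : X₀ × Y => P ((z.1, x₁), z.2)) +
      ∑ x₁, ∑ y, margY (fun z : X₀ × Y => P ((z.1, x₁), z.2)) y *
        (Real.logb 2 (margY (fun z : X₀ × Y => P ((z.1, x₁), z.2)) y) -
          Real.logb 2 (margY P y)) := by
    rw [← Finset.sum_add_distrib, mutualInfo, Fintype.sum_prod_type_right]
    refine Finset.sum_congr rfl fun x₁ _ => ?_
    have hsplit : ∑ y, margY (fun z : X₀ × Y => P ((z.1, x₁), z.2)) y *
        (Real.logb 2 (margY (fun z : X₀ × Y => P ((z.1, x₁), z.2)) y) -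
          Real.logb 2 (margY P y)) = ∑ x₀, ∑ y, P ((x₀, x₁), y) *
        (Real.logb 2 (margY (fun z : X₀ × Y => P ((z.1, x₁), z.2)) y) -
          Real.logb 2 (margY P y)) := by
      rw [Finset.sum_comm]
      refine Finset.sum_congr rfl fun y _ => ?_
      rw [← Finset.sum_mul]
      rfl
    rw [hsplit, mutualInfo, ← Finset.sum_add_distrib]
    refine Finset.sum_congr rfl fun x₀ _ => ?_
    rw [← Finset.sum_add_distrib]
    refine Finset.sum_congr rfl fun y _ => ?_
    by_cases h : P ((x₀, x₁), y) = 0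
    · simp [h]
    have hx := (margX_pos P hP h).ne'
    have hy := (margY_pos P hP h).ne'
    have hy₁ := (margY_pos (fun z : X₀ × Y => P ((z.1, x₁), z.2)) (fun z => hP _)
      (x := x₀) (y := y) h).ne'
    change P ((x₀, x₁), y) * Real.logb 2 (P ((x₀, x₁), y) / (margX P (x₀, x₁) * margY P y)) =
      P ((x₀, x₁), y) * Real.logb 2 (P ((x₀, x₁), y) / (margX P (x₀, x₁) *
        margY (fun z : X₀ × Y => P ((z.1, x₁), z.2)) y)) + _
    rw [Real.logb_div h (mul_ne_zero hx hy), Real.logb_mul hx hy,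
      Real.logb_div h (mul_ne_zero hx hy₁), Real.logb_mul hx hy₁]
    ring
  simp only [leakReg, Finset.sum_sub_distrib]
  linarith

/-- Leakage does not increase when the second part of the second party's output is conditioned
upon; the conditional distributions are left unnormalized. -/
theorem sum_leakReg_slice_snd_le {X Y₀ Y₁ : Type*} [Fintype X] [Fintype Y₀] [Fintype Y₁]
    (P θ : X × (Y₀ × Y₁) → ℝ) (hP : ∀ z, 0 ≤ P z) :
    ∑ y₁, leakReg (fun z : X × Y₀ => P (z.1, (z.2, y₁))) (fun z => θ (z.1, (z.2, y₁))) ≤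
      leakReg P θ := by
  rw [← leakReg_swap P θ]
  refine le_trans (le_of_eq (Finset.sum_congr rfl fun y₁ _ => ?_))
    (sum_leakReg_slice_fst_le (P ∘ Prod.swap) (θ ∘ Prod.swap) fun z => hP _)
  rw [← leakReg_swap]
  rfl

theorem sum_leakReg_slice_le {X₀ X₁ Y₀ Y₁ : Type*}
    [Fintype X₀] [Fintype X₁] [Fintype Y₀] [Fintype Y₁]
    (P θ : (X₀ × X₁) × (Y₀ × Y₁) → ℝ) (hP : ∀ z, 0 ≤ P z) :
    ∑ q : X₁ × Y₁, leakReg (fun z : X₀ × Y₀ => P ((z.1, q.1), (z.2, q.2)))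
      (fun z => θ ((z.1, q.1), (z.2, q.2))) ≤ leakReg P θ := by
  rw [Fintype.sum_prod_type]
  refine le_trans (Finset.sum_le_sum fun x₁ _ => ?_) (sum_leakReg_slice_fst_le P θ hP)
  exact sum_leakReg_slice_snd_le (fun z : X₀ × (Y₀ × Y₁) => P ((z.1, x₁), z.2))
    (fun z => θ ((z.1, x₁), z.2)) fun z => hP _

theorem leakReg_unit (P θ : Unit × Unit → ℝ) (hP : ∀ z, 0 ≤ P z) : leakReg P θ = 0 := by
  have hm : ∀ p : ℝ, p / (p * p) = p⁻¹ := fun p => by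
    by_cases h : p = 0
    · simp [h]
    · field_simp
  rw [leakReg, vNE_of_unique (rhoB_posSemidef P θ).1, rhoB_apply_self_re P θ hP]
  simp [mutualInfo, margX, margY, hm, Real.logb_inv]

theorem leakReg_nonneg {X Y : Type*} [Fintype X] [Fintype Y] (P θ : X × Y → ℝ)
    (hP : ∀ z, 0 ≤ P z) : 0 ≤ leakReg P θ := by
  rw [← leakReg_reindex P θ (Equiv.punitProd X) (Equiv.punitProd Y)]
  refine le_trans (Finset.sum_nonneg fun q _ => ?_)
    (sum_leakReg_slice_le (X₀ := Unit) (Y₀ := Unit) _ _ fun z => hP _)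
  exact (leakReg_unit _ _ fun z => hP _).ge

theorem leakPrim_le_leakReg {X Y : Type*} [Fintype X] [Fintype Y] (P θ : X × Y → ℝ)
    (hP : ∀ z, 0 ≤ P z) : leakPrim P ≤ leakReg P θ :=
  ciInf_le ⟨0, Set.forall_mem_range.2 fun θ => leakReg_nonneg P θ hP⟩ θ

theorem leakPrim_nonneg {X Y : Type*} [Fintype X] [Fintype Y] (P : X × Y → ℝ)
    (hP : ∀ z, 0 ≤ P z) : 0 ≤ leakPrim P :=
  Real.iInf_nonneg fun θ => leakReg_nonneg P θ hP

open scoped Classical in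
/-- **Leakage under reduction.** If, except on a set of `(x₁,y₁)` of
probability at most `δ`, the conditional distribution of `(X₀,Y₀)` given `(x₁,y₁)` agrees
with `P` up to relabeling, then `Δ_{P'} ≥ (1−δ)·Δ_P`. -/
theorem leakPrim_reduction
    {𝒳₀ 𝒳₁ 𝒴₀ 𝒴₁ 𝒳 𝒴 : Type*}
    [Fintype 𝒳₀] [Fintype 𝒳₁] [Fintype 𝒴₀] [Fintype 𝒴₁] [Fintype 𝒳] [Fintype 𝒴]
    [Nonempty 𝒳₀] [Nonempty 𝒳₁] [Nonempty 𝒴₀] [Nonempty 𝒴₁] [Nonempty 𝒳] [Nonempty 𝒴]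
    (P' : (𝒳₀ × 𝒳₁) × (𝒴₀ × 𝒴₁) → ℝ) (hP'0 : ∀ z, 0 ≤ P' z) (hP'1 : ∑ z, P' z = 1)
    (P : 𝒳 × 𝒴 → ℝ) (hP0 : ∀ xy, 0 ≤ P xy) (hP1 : ∑ xy, P xy = 1)
    (δ : ℝ) (hδ0 : 0 ≤ δ) (hδ1 : δ ≤ 1)
    (hG : 1 - δ ≤
      ∑ q ∈ Finset.univ.filter (fun q : 𝒳₁ × 𝒴₁ =>
          0 < margX1Y1 P' q ∧
            ∃ f : 𝒳 ≃ 𝒳₀, ∃ g : 𝒴 ≃ 𝒴₀, ∀ u v,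
              P' ((f u, q.1), (g v, q.2)) / margX1Y1 P' q = P (u, v)),
        margX1Y1 P' q) :
    (1 - δ) * leakPrim P ≤ leakPrim P' := by
  refine le_ciInf fun θ => ?_
  refine le_trans ?_ (sum_leakReg_slice_le P' θ hP'0)
  refine (mul_le_mul_of_nonneg_right hG (leakPrim_nonneg P hP0)).trans ?_
  rw [Finset.sum_mul]
  refine le_trans (Finset.sum_le_sum fun q hq => ?_)
    (Finset.sum_le_sum_of_subset_of_nonneg (Finset.filter_subset _ _)
      fun q _ _ => leakReg_nonneg _ _ fun z => hP'0 _)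
  obtain ⟨hpos, f, g, hfg⟩ := (Finset.mem_filter.1 hq).2
  have hcond : (fun z : 𝒳 × 𝒴 => P' ((f z.1, q.1), (g z.2, q.2))) =
      fun z => margX1Y1 P' q * P z := by
    ext z
    rw [← hfg z.1 z.2, mul_div_cancel₀ _ hpos.ne']
  rw [← leakReg_reindex _ _ f g, hcond, leakReg_const_mul P _ hP0 hpos]
  exact mul_le_mul_of_nonneg_left (leakPrim_le_leakReg P _ hP0) hpos.le
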